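/- arXiv:2509.11146 — 10 statements merged into one kernel-verified Lean document; each statement's English description precedes it below -/
import Mathlib

section
/- Let (X,d) be a nonempty finite positive definite metric space with similarity matrix Z_X = (e^{-d(x,y)})_{x,y∈X}. Then the supremum over nonzero vectors w ∈ ℝ^X of the quotient (Σ_{x∈X} w_x)² / (Σ_{x,y∈X} e^{-d(x,y)} w_x w_y) is attained at w = Z_X^{-1}𝟏 (where 𝟏 is the all-ones vector), and its value equals ⟨𝟏, Z_X^{-1}𝟏⟩ = Σ_{x∈X} (Z_X^{-1}𝟏)_x. -/
/-!
With `v = Z⁻¹ 𝟏` the vector `v` satisfies `Z v = 𝟏`, so `⟨w, Z v⟩ = Σ w` for every `w`; in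
particular `⟨v, Z v⟩ = Σ v =: S`, which is positive and makes the quotient at `v` equal to `S`.
For arbitrary `w` the bound `(Σ w)² ≤ S ⟨w, Z w⟩` is the Cauchy–Schwarz inequality for the inner
product defined by `Z`, proved by evaluating the form at `S w - (Σ w) v`.
-/

open scoped BigOperators
open Matrix

/-- The similarity matrix `Z_X = (e^{-d(x,y)})` of a finite metric space. -/
noncomputable def simMat (X : Type*) [Fintype X] [MetricSpace X] : Matrix X X ℝ :=
  Matrix.of fun x y => Real.exp (-dist x y)

/-- The quotient `(Σ w_x)² / (Σ e^{-d(x,y)} w_x w_y)`. -/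
noncomputable def magRatio {X : Type*} [Fintype X] [MetricSpace X] (w : X → ℝ) : ℝ :=
  (∑ x, w x) ^ 2 / ∑ x, ∑ y, Real.exp (-dist x y) * w x * w y

lemma sum_exp_eq_dotProduct {X : Type*} [Fintype X] [MetricSpace X] (w : X → ℝ) :
    ∑ x, ∑ y, Real.exp (-dist x y) * w x * w y = w ⬝ᵥ (simMat X *ᵥ w) := by
  simp only [dotProduct, mulVec, simMat, Matrix.of_apply, Finset.mul_sum]
  exact Finset.sum_congr rfl fun x _ => Finset.sum_congr rfl fun y _ => by ring

/-- for a nonempty finite positive definite metric space, the supremum of the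
magnitude quotient over nonzero vectors is attained at `w = Z⁻¹ 𝟏`, and its value is
`Σ_x (Z⁻¹ 𝟏)_x`. -/
theorem stmt0 {X : Type*} [Fintype X] [DecidableEq X] [Nonempty X] [MetricSpace X]
    (hpd : (simMat X).PosDef) :
    magRatio ((simMat X)⁻¹ *ᵥ (fun _ => (1 : ℝ))) =
        ∑ x, ((simMat X)⁻¹ *ᵥ (fun _ => (1 : ℝ))) x ∧
      IsGreatest {r : ℝ | ∃ w : X → ℝ, w ≠ 0 ∧ r = magRatio w}
        (∑ x, ((simMat X)⁻¹ *ᵥ (fun _ => (1 : ℝ))) x) := by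
  have hpos : ∀ w : X → ℝ, w ≠ 0 → 0 < w ⬝ᵥ (simMat X *ᵥ w) := fun w hw => by
    simpa using hpd.dotProduct_mulVec_pos hw
  have hZv : simMat X *ᵥ ((simMat X)⁻¹ *ᵥ (fun _ => (1 : ℝ))) = fun _ => 1 := by
    rw [mulVec_mulVec, Matrix.mul_nonsing_inv _ ((Matrix.isUnit_iff_isUnit_det _).1 hpd.isUnit),
      one_mulVec]
  generalize (simMat X)⁻¹ *ᵥ (fun _ => (1 : ℝ)) = v at hZv ⊢
  have hdot : ∀ w : X → ℝ, w ⬝ᵥ (simMat X *ᵥ v) = ∑ x, w x := fun w => by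
    rw [hZv]; simp [dotProduct]
  have hsymm : (simMat X)ᵀ = simMat X := by
    ext x y; simp [simMat, dist_comm]
  have hdot' : ∀ w : X → ℝ, v ⬝ᵥ (simMat X *ᵥ w) = ∑ x, w x := fun w => by
    rw [← hdot w, dotProduct_mulVec, ← mulVec_transpose, hsymm, dotProduct_comm]
  have hv0 : v ≠ 0 := by
    rintro rfl
    obtain ⟨x⟩ := ‹Nonempty X›
    simpa using congrFun hZv x
  have hS : 0 < ∑ x, v x := hdot v ▸ hpos v hv0
  have hval : magRatio v = ∑ x, v x := by
    rw [magRatio, sum_exp_eq_dotProduct, hdot, sq, mul_div_cancel_right₀ _ hS.ne']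
  refine ⟨hval, ⟨v, hv0, hval.symm⟩, ?_⟩
  rintro r ⟨w, hw, rfl⟩
  rw [magRatio, sum_exp_eq_dotProduct, div_le_iff₀ (hpos w hw)]
  have h : 0 ≤ ((∑ x, v x) • w - (∑ x, w x) • v) ⬝ᵥ
      (simMat X *ᵥ ((∑ x, v x) • w - (∑ x, w x) • v)) := by
    simpa using hpd.posSemidef.dotProduct_mulVec_nonneg ((∑ x, v x) • w - (∑ x, w x) • v)
  simp only [mulVec_sub, mulVec_smul, sub_dotProduct, dotProduct_sub, smul_dotProduct,
    dotProduct_smul, hdot, hdot', Pi.sub_apply, Pi.smul_apply, smul_eq_mul,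
    Finset.sum_sub_distrib, ← Finset.mul_sum] at h
  -- The form at `S w - (Σ w) v` equals `S (S ⟨w, Z w⟩ - (Σ w)²)`, and `S > 0` can be cancelled.
  refine le_of_sub_nonneg (nonneg_of_mul_nonneg_right ?_ hS)
  linarith
end

section
/- Let (X,d) be a nonempty finite positive definite metric space. Then the supremum defining the maximum diversity, namely the supremum over nonzero entrywise-nonnegative w ∈ ℝ^X of (Σ_{x∈X} w_x)² / (Σ_{x,y∈X} e^{-d(x,y)} w_x w_y), is attained by some nonzero entrywise-nonnegative vector, any two such maximizers are positive scalar multiples of each other, and hence there is a unique entrywise-nonnegative maximizer w_{X,+} normalized so that Σ_{x∈X} (w_{X,+})_x equals the supremum value |X|_+. -/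
/-!
The quotient `magRatio w = (∑ w)² / Q w`, with `Q` the quadratic form of the similarity matrix, is
invariant under nonzero scaling, and `Q` is positive definite.

A maximizer exists because the quotient is continuous on the (compact) standard simplex, and every
nonzero nonnegative vector can be scaled into the simplex.

For uniqueness up to scale, rescale two maximizers to `u`, `v` with the same total mass `S`. Then
`Q u = Q v`, and the parallelogram law gives `Q (u + v) + Q (u - v) = 4 Q u`. If `u ≠ v`, then
`Q (u + v) < 4 Q u`, so `u + v`, of mass `2 S`, would have a larger quotient than `u`.

The maximum is positive, so exactly one multiple of a maximizer has the maximum as its total mass.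
-/

open scoped BigOperators

/-- The maximum diversity: the supremum of the quotient over nonzero entrywise-nonnegative
vectors. -/
noncomputable def maxDiv (X : Type*) [Fintype X] [MetricSpace X] : ℝ :=
  sSup {r : ℝ | ∃ w : X → ℝ, w ≠ 0 ∧ (∀ x, 0 ≤ w x) ∧ r = magRatio w}

/-- `w` maximizes the quotient among nonzero entrywise-nonnegative vectors. -/
def IsDivMaximizer {X : Type*} [Fintype X] [MetricSpace X] (w : X → ℝ) : Prop :=
  w ≠ 0 ∧ (∀ x, 0 ≤ w x) ∧
    ∀ v : X → ℝ, v ≠ 0 → (∀ x, 0 ≤ v x) → magRatio v ≤ magRatio w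

/-- The quadratic form of the similarity matrix, i.e. the denominator of `magRatio`. -/
noncomputable def simForm {X : Type*} [Fintype X] [MetricSpace X] (w : X → ℝ) : ℝ :=
  ∑ x, ∑ y, Real.exp (-dist x y) * w x * w y

section

variable {X : Type*} [Fintype X]

lemma sum_smul_apply (c : ℝ) (w : X → ℝ) : ∑ x, (c • w) x = c * ∑ x, w x := by
  simp [Finset.mul_sum]

lemma sum_pos_of_nonneg_ne_zero {w : X → ℝ} (hw : w ≠ 0) (h0 : ∀ x, 0 ≤ w x) :
    0 < ∑ x, w x := by
  obtain ⟨a, ha⟩ := Function.ne_iff.mp hw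
  exact Finset.sum_pos' (fun x _ => h0 x) ⟨a, Finset.mem_univ a, (h0 a).lt_of_ne' ha⟩

variable [MetricSpace X]

lemma magRatio_eq_div (w : X → ℝ) : magRatio w = (∑ x, w x) ^ 2 / simForm w := rfl

lemma simForm_pos (hpd : (simMat X).PosDef) {w : X → ℝ} (hw : w ≠ 0) : 0 < simForm w := by
  have h := hpd.dotProduct_mulVec_pos hw
  simp only [dotProduct, Matrix.mulVec, simMat, Matrix.of_apply, Pi.star_apply, star_trivial,
    Finset.mul_sum] at h
  refine h.trans_eq (Finset.sum_congr rfl fun x _ => Finset.sum_congr rfl fun y _ => ?_)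
  ring

lemma simForm_smul (c : ℝ) (w : X → ℝ) : simForm (c • w) = c ^ 2 * simForm w := by
  simp only [simForm, Finset.mul_sum, Pi.smul_apply, smul_eq_mul]
  refine Finset.sum_congr rfl fun x _ => Finset.sum_congr rfl fun y _ => ?_
  ring

lemma simForm_parallelogram (u v : X → ℝ) :
    simForm (u + v) + simForm (u - v) = 2 * simForm u + 2 * simForm v := by
  simp only [simForm, Finset.mul_sum, ← Finset.sum_add_distrib, Pi.add_apply, Pi.sub_apply]
  refine Finset.sum_congr rfl fun x _ => Finset.sum_congr rfl fun y _ => ?_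
  ring

lemma magRatio_smul {c : ℝ} (hc : c ≠ 0) (w : X → ℝ) : magRatio (c • w) = magRatio w := by
  rw [magRatio_eq_div, magRatio_eq_div, simForm_smul, sum_smul_apply, mul_pow,
    mul_div_mul_left _ _ (pow_ne_zero 2 hc)]

lemma IsDivMaximizer.smul {w : X → ℝ} (h : IsDivMaximizer w) {c : ℝ} (hc : 0 < c) :
    IsDivMaximizer (c • w) :=
  ⟨smul_ne_zero hc.ne' h.1, fun x => mul_nonneg hc.le (h.2.1 x), fun v hv hv0 => by
    rw [magRatio_smul hc.ne']
    exact h.2.2 v hv hv0⟩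

lemma IsDivMaximizer.magRatio_pos (hpd : (simMat X).PosDef) {w : X → ℝ}
    (h : IsDivMaximizer w) : 0 < magRatio w :=
  div_pos (pow_pos (sum_pos_of_nonneg_ne_zero h.1 h.2.1) 2) (simForm_pos hpd h.1)

lemma IsDivMaximizer.magRatio_eq_maxDiv {w : X → ℝ} (h : IsDivMaximizer w) :
    magRatio w = maxDiv X := by
  have hg : IsGreatest {r : ℝ | ∃ w : X → ℝ, w ≠ 0 ∧ (∀ x, 0 ≤ w x) ∧ r = magRatio w}
      (magRatio w) := by
    refine ⟨⟨w, h.1, h.2.1, rfl⟩, ?_⟩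
    rintro r ⟨v, hv, hv0, rfl⟩
    exact h.2.2 v hv hv0
  exact hg.csSup_eq.symm

lemma exists_isDivMaximizer [Nonempty X] (hpd : (simMat X).PosDef) :
    ∃ w : X → ℝ, IsDivMaximizer w := by
  classical
  have hne : ∀ w ∈ stdSimplex ℝ X, w ≠ 0 := by
    rintro w ⟨_, hw⟩ rfl
    simp at hw
  have hcont : ContinuousOn (magRatio : (X → ℝ) → ℝ) (stdSimplex ℝ X) := by
    refine ContinuousOn.div ?_ ?_ fun w hw => (simForm_pos hpd (hne w hw)).ne'
    · fun_prop
    · fun_prop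
  obtain ⟨w, hw, hmax⟩ := (isCompact_stdSimplex ℝ X).exists_isMaxOn
    ⟨_, single_mem_stdSimplex ℝ (Classical.arbitrary X)⟩ hcont
  refine ⟨w, hne w hw, hw.1, fun v hv hv0 => ?_⟩
  have hs := sum_pos_of_nonneg_ne_zero hv hv0
  have hmem : (∑ x, v x)⁻¹ • v ∈ stdSimplex ℝ X :=
    ⟨fun x => mul_nonneg (inv_nonneg.2 hs.le) (hv0 x), by
      rw [sum_smul_apply, inv_mul_cancel₀ hs.ne']⟩
  rw [← magRatio_smul (inv_ne_zero hs.ne') v]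
  exact hmax hmem

/-- Maximizers of equal total mass coincide: otherwise, by the parallelogram law, their sum would
have a strictly larger quotient. -/
lemma IsDivMaximizer.eq_of_sum_eq (hpd : (simMat X).PosDef) {u v : X → ℝ}
    (hu : IsDivMaximizer u) (hv : IsDivMaximizer v) (hs : ∑ x, u x = ∑ x, v x) : u = v := by
  by_contra hne
  have hS := sum_pos_of_nonneg_ne_zero hu.1 hu.2.1
  have hQu := simForm_pos hpd hu.1
  have hQv := simForm_pos hpd hv.1
  have hQ : simForm u = simForm v := by
    have h := hu.magRatio_eq_maxDiv.trans hv.magRatio_eq_maxDiv.symm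
    rw [magRatio_eq_div, magRatio_eq_div, ← hs] at h
    rw [div_eq_div_iff hQu.ne' hQv.ne'] at h
    exact (mul_left_cancel₀ (pow_pos hS 2).ne' h).symm
  have hsum : ∑ x, (u + v) x = 2 * ∑ x, u x := by
    simp only [Pi.add_apply, Finset.sum_add_distrib, ← hs]
    ring
  have huv : u + v ≠ 0 := by
    intro h
    simp only [h, Pi.zero_apply, Finset.sum_const_zero] at hsum
    linarith
  have hle := hu.2.2 (u + v) huv fun x => add_nonneg (hu.2.1 x) (hv.2.1 x)
  rw [magRatio_eq_div, magRatio_eq_div, hsum, div_le_div_iff₀ (simForm_pos hpd huv) hQu] at hle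
  have hlt : simForm (u + v) < 4 * simForm u := by
    have := simForm_pos hpd (sub_ne_zero.2 hne)
    linarith [simForm_parallelogram u v]
  have := mul_lt_mul_of_pos_left hlt (pow_pos hS 2)
  linarith

end

/-- the supremum defining the maximum diversity is attained by some nonzero
nonnegative vector, any two maximizers are positive scalar multiples of each other, and there
is a unique maximizer normalized so that its total mass is `|X|₊`. -/
theorem stmt2 {X : Type*} [Fintype X] [Nonempty X] [MetricSpace X]
    (hpd : (simMat X).PosDef) :
    (∃ w : X → ℝ, IsDivMaximizer w) ∧
      (∀ w₁ w₂ : X → ℝ, IsDivMaximizer w₁ → IsDivMaximizer w₂ →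
        ∃ c : ℝ, 0 < c ∧ w₂ = c • w₁) ∧
      (∃! w : X → ℝ, IsDivMaximizer w ∧ ∑ x, w x = maxDiv X) := by
  refine ⟨exists_isDivMaximizer hpd, fun w₁ w₂ h₁ h₂ => ?_, ?_⟩
  · have hs₁ := sum_pos_of_nonneg_ne_zero h₁.1 h₁.2.1
    have hs₂ := sum_pos_of_nonneg_ne_zero h₂.1 h₂.2.1
    have hc := div_pos hs₂ hs₁
    refine ⟨_, hc, h₂.eq_of_sum_eq hpd (h₁.smul hc) ?_⟩
    rw [sum_smul_apply, div_mul_cancel₀ _ hs₁.ne']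
  · obtain ⟨w, hw⟩ := exists_isDivMaximizer hpd
    have hs := sum_pos_of_nonneg_ne_zero hw.1 hw.2.1
    have hc : 0 < maxDiv X / ∑ x, w x :=
      div_pos (hw.magRatio_eq_maxDiv ▸ hw.magRatio_pos hpd) hs
    have hsum : ∑ x, ((maxDiv X / ∑ x, w x) • w) x = maxDiv X := by
      rw [sum_smul_apply, div_mul_cancel₀ _ hs.ne']
    exact ⟨_, ⟨hw.smul hc, hsum⟩, fun v hv =>
      hv.1.eq_of_sum_eq hpd (hw.smul hc) (hv.2.trans hsum.symm)⟩
end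

section
/- Let (X,d) be a nonempty finite positive definite metric space with similarity matrix Z_X and diversifier w_{X,+}. Then every entry of the vector Z_X w_{X,+} is greater than or equal to 1, and at least one entry of Z_X w_{X,+} is equal to 1. -/
/-!
The inequality is the first-order optimality condition for the diversifier. Write `S = ∑ w` and
`a = Z w`. Maximality identifies `maxDiv X` with `magRatio w = S² / wᵀZw`, so the normalization
`S = maxDiv X` forces `wᵀZw = S`. Comparing `w` with `w + t eₓ` for `t > 0` gives
`(S + t)² ≤ S (S + 2 t aₓ + t²)`; if `aₓ < 1`, the choice `t = 1 - aₓ` contradicts this.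

For the equality, `∑ wₓ (aₓ - 1) = wᵀZw - S = 0` is a sum of nonnegative terms, so `aₓ = 1` at
any point `x` with `wₓ > 0`.
-/

open scoped BigOperators

/-- `w` is the diversifier of `X`: a nonzero entrywise-nonnegative maximizer of the quotient
among such vectors, normalized so that `Σ_x w_x = |X|₊`. -/
def IsDiversifier {X : Type*} [Fintype X] [MetricSpace X] (w : X → ℝ) : Prop :=
  w ≠ 0 ∧ (∀ x, 0 ≤ w x) ∧
    (∀ v : X → ℝ, v ≠ 0 → (∀ x, 0 ≤ v x) → magRatio v ≤ magRatio w) ∧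
    ∑ x, w x = maxDiv X

/-- On nonzero nonnegative vectors the quadratic form is positive because the entries of the
similarity matrix are. -/
lemma quad_pos {X : Type*} [Fintype X] [MetricSpace X] {v : X → ℝ} (hv : v ≠ 0)
    (h0 : ∀ x, 0 ≤ v x) : 0 < ∑ x, ∑ y, Real.exp (-dist x y) * v x * v y := by
  obtain ⟨z, hz⟩ := Function.ne_iff.mp hv
  have hz : 0 < v z := lt_of_le_of_ne (h0 z) (Ne.symm hz)
  have hnn : ∀ x y, 0 ≤ Real.exp (-dist x y) * v x * v y := fun x y =>
    mul_nonneg (mul_nonneg (Real.exp_pos _).le (h0 x)) (h0 y)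
  refine Finset.sum_pos' (fun x _ => Finset.sum_nonneg fun y _ => hnn x y)
    ⟨z, Finset.mem_univ _, Finset.sum_pos' (fun y _ => hnn z y) ⟨z, Finset.mem_univ _, ?_⟩⟩
  positivity

lemma quad_perturb {X : Type*} [Fintype X] [DecidableEq X] [MetricSpace X] (w : X → ℝ) (z : X)
    (t : ℝ) :
    ∑ x, ∑ y, Real.exp (-dist x y) * (w x + if x = z then t else 0) *
        (w y + if y = z then t else 0) =
      (∑ x, ∑ y, Real.exp (-dist x y) * w x * w y) +
        2 * t * (∑ y, Real.exp (-dist z y) * w y) + t ^ 2 := by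
  simp only [mul_add, add_mul, Finset.sum_add_distrib, mul_ite, ite_mul, mul_zero, zero_mul,
    Finset.sum_ite_eq', Finset.mem_univ, if_true, Finset.sum_ite_irrel, Finset.sum_const_zero,
    dist_self, neg_zero, Real.exp_zero]
  have h1 : ∑ x, Real.exp (-dist x z) * w x * t = t * ∑ y, Real.exp (-dist z y) * w y := by
    rw [Finset.mul_sum]
    exact Finset.sum_congr rfl fun x _ => by rw [dist_comm]; ring
  have h2 : ∑ x, Real.exp (-dist z x) * t * w x = t * ∑ y, Real.exp (-dist z y) * w y := by
    rw [Finset.mul_sum]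
    exact Finset.sum_congr rfl fun x _ => by ring
  rw [h1, h2]
  ring

/-- every entry of `Z_X w_{X,+}` is at least `1`, and at least one entry
equals `1`. -/
theorem stmt7 {X : Type*} [Fintype X] [Nonempty X] [MetricSpace X]
    (hpd : (simMat X).PosDef) (w : X → ℝ) (hw : IsDiversifier w) :
    (∀ x, 1 ≤ ∑ y, Real.exp (-dist x y) * w y) ∧
      ∃ x, ∑ y, Real.exp (-dist x y) * w y = 1 := by
  classical
  obtain ⟨hne, h0, hmax, hsum⟩ := hw
  have hQ := quad_pos hne h0
  obtain ⟨z, hz⟩ := Function.ne_iff.mp hne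
  have hz : 0 < w z := lt_of_le_of_ne (h0 z) (Ne.symm hz)
  have hS : 0 < ∑ x, w x := Finset.sum_pos' (fun x _ => h0 x) ⟨z, Finset.mem_univ _, hz⟩
  have hdiv : maxDiv X = magRatio w := by
    refine IsGreatest.csSup_eq ⟨⟨w, hne, h0, rfl⟩, ?_⟩
    rintro r ⟨v, hv, hv0, rfl⟩
    exact hmax v hv hv0
  have hratio : magRatio w = ∑ x, w x := by rw [hsum, hdiv]
  have hQS : ∑ x, ∑ y, Real.exp (-dist x y) * w x * w y = ∑ x, w x := by
    have h := hratio
    rw [magRatio, div_eq_iff hQ.ne', sq] at h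
    exact (mul_left_cancel₀ hS.ne' h).symm
  have hge : ∀ x, 1 ≤ ∑ y, Real.exp (-dist x y) * w y := by
    intro x
    by_contra! hlt
    set a := ∑ y, Real.exp (-dist x y) * w y with ha
    set t := 1 - a with ht
    have htpos : 0 < t := by linarith
    set v : X → ℝ := fun y => w y + if y = x then t else 0 with hvdef
    have hv0 : ∀ y, 0 ≤ v y := fun y => by
      have := h0 y
      simp only [hvdef]
      split_ifs <;> linarith
    have hvne : v ≠ 0 := by
      intro h
      have h1 := congrFun h z
      simp only [hvdef, Pi.zero_apply] at h1
      split_ifs at h1 <;> linarith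
    have h := hmax v hvne hv0
    have hvsum : ∑ y, v y = (∑ y, w y) + t := by
      simp [hvdef, Finset.sum_add_distrib]
    rw [hratio, magRatio, div_le_iff₀ (quad_pos hvne hv0), hvsum, quad_perturb, hQS, ← ha] at h
    have hSt := mul_pos hS (mul_pos htpos htpos)
    have ha' : a = 1 - t := by rw [ht]; ring
    rw [ha'] at h
    nlinarith [mul_pos htpos htpos]
  refine ⟨hge, z, ?_⟩
  have hzero : ∑ x, w x * ((∑ y, Real.exp (-dist x y) * w y) - 1) = 0 := by
    simp only [mul_sub, mul_one, Finset.sum_sub_distrib]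
    rw [← hQS, sub_eq_zero]
    refine Finset.sum_congr rfl fun x _ => ?_
    rw [Finset.mul_sum]
    exact Finset.sum_congr rfl fun y _ => by ring
  have hterm := (Finset.sum_eq_zero_iff_of_nonneg fun x _ =>
    mul_nonneg (h0 x) (sub_nonneg.mpr (hge x))).mp hzero z (Finset.mem_univ _)
  exact sub_eq_zero.mp ((mul_eq_zero.mp hterm).resolve_left hz.ne')
end

section
/- Let C be a nonempty finite positive definite metric space, A ⊆ C a nonempty subset, w_A and w_C their weightings, with w_A extended by zero to a vector indexed by C. Then Σ_{x,y∈C} e^{-d(x,y)} ((w_A)_x − (w_C)_x)((w_A)_y − (w_C)_y) = |C| − |A|; that is, the squared Z_C-norm of w_A − w_C equals the difference of magnitudes. -/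
/-!
Write `Z` for the similarity matrix of `C`. Since `Z w_C = 𝟏`, the left-hand side is
`⟨w_A - w_C, Z w_A - 𝟏⟩`. The term `⟨w_A, Z w_A - 𝟏⟩` vanishes because `Z w_A = 𝟏` on `A` and
`w_A = 0` off `A`, while symmetry of `Z` gives `⟨w_C, Z w_A⟩ = ⟨Z w_C, w_A⟩ = |A|`. What is left
is `⟨w_C, 𝟏⟩ - |A| = |C| - |A|`.
-/

open scoped BigOperators

/-- for the weightings `w_A` (extended by zero) and `w_C` of a subset `A` of a
finite positive definite metric space `C`, the squared `Z_C`-norm of `w_A − w_C` equals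
`|C| − |A|`, where the magnitude is the total mass of the weighting. -/
theorem stmt9 {C : Type*} [Fintype C] [Nonempty C] [MetricSpace C]
    (hpd : (simMat C).PosDef)
    (A : Finset C) (hA : A.Nonempty) (wA wC : C → ℝ)
    (hwA_supp : ∀ x ∉ A, wA x = 0)
    (hwA : ∀ x ∈ A, ∑ y ∈ A, Real.exp (-dist x y) * wA y = 1)
    (hwC : ∀ x : C, ∑ y, Real.exp (-dist x y) * wC y = 1) :
    ∑ x, ∑ y, Real.exp (-dist x y) * (wA x - wC x) * (wA y - wC y) =
      ∑ x, wC x - ∑ x ∈ A, wA x := by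
  have hsupp : ∀ f : C → ℝ, ∑ y, f y * wA y = ∑ y ∈ A, f y * wA y := fun f =>
    (Finset.sum_subset (Finset.subset_univ A)
      fun y _ hy => by rw [hwA_supp y hy, mul_zero]).symm
  have hmassA : ∑ x, wA x = ∑ x ∈ A, wA x := by simpa using hsupp fun _ => 1
  have hrow : ∀ x, ∑ y, Real.exp (-dist x y) * (wA x - wC x) * (wA y - wC y) =
      (wA x - wC x) * (∑ y, Real.exp (-dist x y) * wA y - 1) := by
    intro x
    rw [← hwC x, ← Finset.sum_sub_distrib, Finset.mul_sum]
    exact Finset.sum_congr rfl fun y _ => by ring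
  -- On `A` the second factor vanishes; off `A` the first one does.
  have hAA : ∀ x, wA x * (∑ y, Real.exp (-dist x y) * wA y - 1) = 0 := by
    intro x
    by_cases hx : x ∈ A
    · rw [hsupp, hwA x hx, sub_self, mul_zero]
    · rw [hwA_supp x hx, zero_mul]
  have hcross : ∑ x, wC x * ∑ y, Real.exp (-dist x y) * wA y = ∑ x, wA x := by
    simp_rw [Finset.mul_sum]
    rw [Finset.sum_comm]
    refine Finset.sum_congr rfl fun y _ => ?_
    calc ∑ x, wC x * (Real.exp (-dist x y) * wA y)
        = wA y * ∑ x, Real.exp (-dist y x) * wC x := by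
          rw [Finset.mul_sum]
          exact Finset.sum_congr rfl fun x _ => by rw [dist_comm x y]; ring
      _ = wA y := by rw [hwC y, mul_one]
  simp_rw [hrow, sub_mul, hAA, zero_sub, mul_sub, mul_one, neg_sub]
  rw [Finset.sum_sub_distrib, hcross, hmassA]
end

section
/- Let A and B be nonempty finite subsets of a positive definite metric space X, with weightings w_A and w_B regarded as vectors indexed by A∪B by extension with zeros. Then ‖w_A − w_B‖_W ≤ √(|A∪B| − |A|) + √(|A∪B| − |B|), where ‖u‖_W = (Σ_{x,y∈A∪B} e^{-d(x,y)} u_x u_y)^{1/2} and |·| denotes magnitude. -/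
/-! The form `quadW (A ∪ B)` is a positive semidefinite symmetric bilinear form, so its square root
satisfies the triangle inequality (`sqrt_quadW_add_le`). Apply this to
`w_A - w_B = (w_A - w_U) + (w_U - w_B)` with `U = A ∪ B`. For `S ⊆ U` the defining equations of the
weightings give `⟨w_S, w_S⟩ = |S|`, `⟨w_U, w_S⟩ = |S|` and `⟨w_U, w_U⟩ = |U|`, hence
`‖w_U - w_S‖² = |U| - |S|` (`quadW_weighting_sub`). -/


open scoped BigOperators

/-- A metric space is positive definite if every finite subspace has positive definite
similarity matrix `(e^{-d(x,y)})`. -/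
def PosDefSpace (X : Type*) [MetricSpace X] : Prop :=
  ∀ s : Finset X,
    Matrix.PosDef (Matrix.of fun x y : s => Real.exp (-dist (x : X) (y : X)))

/-- The pairing `Σ_{x,y∈s} e^{-d(x,y)} u_x v_y`. -/
noncomputable def quadW {X : Type*} [MetricSpace X] (s : Finset X) (u v : X → ℝ) : ℝ :=
  ∑ x ∈ s, ∑ y ∈ s, Real.exp (-dist x y) * u x * v y

/-- `w` is the weighting of the finite subset `s` (extended by zero outside `s`):
the unique vector with `Z_s w = 𝟏` on `s`. -/
def IsWeighting {X : Type*} [MetricSpace X] (s : Finset X) (w : X → ℝ) : Prop :=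
  (∀ x ∉ s, w x = 0) ∧ ∀ x ∈ s, ∑ y ∈ s, Real.exp (-dist x y) * w y = 1

theorem quadW_self_nonneg {X : Type*} [MetricSpace X] (hpd : PosDefSpace X) (s : Finset X)
    (u : X → ℝ) : 0 ≤ quadW s u u := by
  have h := (hpd s).posSemidef.dotProduct_mulVec_nonneg (fun x : s => u x)
  have e : quadW s u u = ∑ x : s, u x * ∑ y : s, Real.exp (-dist (x : X) (y : X)) * u y := by
    unfold quadW
    rw [← Finset.sum_coe_sort]
    refine Finset.sum_congr rfl fun x _ => ?_
    rw [← Finset.sum_coe_sort, Finset.mul_sum]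
    exact Finset.sum_congr rfl fun y _ => by ring
  rw [e]
  simpa [dotProduct, Matrix.mulVec] using h

theorem quadW_comm {X : Type*} [MetricSpace X] (s : Finset X) (u v : X → ℝ) :
    quadW s u v = quadW s v u := by
  unfold quadW
  rw [Finset.sum_comm]
  refine Finset.sum_congr rfl fun x _ => Finset.sum_congr rfl fun y _ => ?_
  rw [dist_comm]
  ring

theorem quadW_add_left {X : Type*} [MetricSpace X] (s : Finset X) (u v w : X → ℝ) :
    quadW s (u + v) w = quadW s u w + quadW s v w := by
  unfold quadW
  simp only [← Finset.sum_add_distrib, Pi.add_apply]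
  exact Finset.sum_congr rfl fun x _ => Finset.sum_congr rfl fun y _ => by ring

theorem quadW_smul_left {X : Type*} [MetricSpace X] (s : Finset X) (c : ℝ) (u w : X → ℝ) :
    quadW s (c • u) w = c * quadW s u w := by
  unfold quadW
  simp only [Finset.mul_sum, Pi.smul_apply, smul_eq_mul]
  exact Finset.sum_congr rfl fun x _ => Finset.sum_congr rfl fun y _ => by ring

theorem quadW_add_smul_self {X : Type*} [MetricSpace X] (s : Finset X) (c : ℝ) (u v : X → ℝ) :
    quadW s (u + c • v) (u + c • v) =
      quadW s u u + 2 * c * quadW s u v + c * c * quadW s v v := by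
  rw [quadW_add_left, quadW_smul_left, quadW_comm s u (u + _), quadW_comm s v (u + _),
    quadW_add_left, quadW_add_left, quadW_smul_left, quadW_smul_left, quadW_comm s v u]
  ring

/-- Triangle inequality for the seminorm `‖·‖_W`; Cauchy–Schwarz comes from the discriminant of
`c ↦ ‖u + c v‖²`. -/
theorem sqrt_quadW_add_le {X : Type*} [MetricSpace X] (hpd : PosDefSpace X) (s : Finset X)
    (u v : X → ℝ) :
    √(quadW s (u + v) (u + v)) ≤ √(quadW s u u) + √(quadW s v v) := by
  have hu := quadW_self_nonneg hpd s u
  have hv := quadW_self_nonneg hpd s v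
  have hd : discrim (quadW s v v) (2 * quadW s u v) (quadW s u u) ≤ 0 := by
    refine discrim_le_zero fun c => ?_
    have := quadW_self_nonneg hpd s (u + c • v)
    rw [quadW_add_smul_self] at this
    linarith
  have hcs : quadW s u v ≤ √(quadW s u u) * √(quadW s v v) := by
    rw [← Real.sqrt_mul hu]
    apply Real.le_sqrt_of_sq_le
    unfold discrim at hd
    linarith
  have hadd := quadW_add_smul_self s 1 u v
  rw [one_smul] at hadd
  refine Real.sqrt_le_iff.mpr ⟨by positivity, ?_⟩
  rw [hadd, add_sq, Real.sq_sqrt hu, Real.sq_sqrt hv]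
  linarith

/-- If `w` solves the weighting equations of `s` at every point of `s`, and `v` is supported on
`s ⊆ t`, then pairing `v` with `w` over `t` gives the total mass of `v`. -/
theorem quadW_weighting {X : Type*} [MetricSpace X] {s t : Finset X} (hst : s ⊆ t)
    {v w : X → ℝ} (hv : ∀ x ∉ s, v x = 0)
    (hw : ∀ x ∈ s, ∑ y ∈ t, Real.exp (-dist x y) * w y = 1) :
    quadW t v w = ∑ x ∈ s, v x := by
  unfold quadW
  rw [← Finset.sum_subset hst fun x _ hx => by simp [hv x hx]]
  refine Finset.sum_congr rfl fun x hx => ?_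
  calc _ = v x * ∑ y ∈ t, Real.exp (-dist x y) * w y := by
        rw [Finset.mul_sum]
        exact Finset.sum_congr rfl fun y _ => by ring
    _ = v x := by rw [hw x hx, mul_one]

theorem quadW_weighting_sub {X : Type*} [MetricSpace X] {s t : Finset X} (hst : s ⊆ t)
    {v w : X → ℝ} (hv : IsWeighting s v) (hw : IsWeighting t w) :
    quadW t (w - v) (w - v) = (∑ x ∈ t, w x) - ∑ x ∈ s, v x := by
  have h := quadW_add_smul_self t (-1) w v
  have hvv : quadW t v v = ∑ x ∈ s, v x := by
    refine quadW_weighting hst hv.1 fun x hx => ?_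
    rw [← hv.2 x hx]
    exact (Finset.sum_subset hst fun y _ hy => by simp [hv.1 y hy]).symm
  rw [neg_one_smul, ← sub_eq_add_neg, hvv, quadW_comm t w v,
    quadW_weighting hst hv.1 fun x hx => hw.2 x (hst hx),
    quadW_weighting subset_rfl hw.1 hw.2] at h
  rw [h]
  ring

/-- `‖w_A − w_B‖_W ≤ √(|A∪B| − |A|) + √(|A∪B| − |B|)`, where the magnitude of a
finite subset is the total mass of its weighting. -/
theorem stmt10 {X : Type*} [MetricSpace X] [DecidableEq X] (hpd : PosDefSpace X)
    (A B : Finset X) (hA : A.Nonempty) (hB : B.Nonempty)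
    (wA wB wU : X → ℝ)
    (hwA : IsWeighting A wA) (hwB : IsWeighting B wB) (hwU : IsWeighting (A ∪ B) wU) :
    Real.sqrt (quadW (A ∪ B) (wA - wB) (wA - wB)) ≤
      Real.sqrt ((∑ x ∈ A ∪ B, wU x) - ∑ x ∈ A, wA x) +
        Real.sqrt ((∑ x ∈ A ∪ B, wU x) - ∑ x ∈ B, wB x) := by
  have hA' := quadW_weighting_sub Finset.subset_union_left hwA hwU
  have hB' := quadW_weighting_sub Finset.subset_union_right hwB hwU
  have hneg : quadW (A ∪ B) (wA - wU) (wA - wU) = quadW (A ∪ B) (wU - wA) (wU - wA) := by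
    unfold quadW
    refine Finset.sum_congr rfl fun x _ => Finset.sum_congr rfl fun y _ => ?_
    simp only [Pi.sub_apply]
    ring
  have h := sqrt_quadW_add_le hpd (A ∪ B) (wA - wU) (wU - wB)
  rwa [sub_add_sub_cancel, hneg, hA', hB'] at h
end

section
/- Let X be a positive definite metric space and let A, B be nonempty compact subsets of X whose maximum diversities |A|_+ and |B|_+ (defined as suprema over finite subsets) are finite. Then |B|_+/|A|_+ ≥ 1 − 8·|A|_+·d_H(A,B), and if moreover 8·|A|_+·d_H(A,B) < 1 then |B|_+/|A|_+ ≤ 1/(1 − 8·|A|_+·d_H(A,B)), where d_H denotes the Hausdorff distance. -/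
/-!
Write `ε` for the Hausdorff distance of `A` and `B`. The theorem follows from the stronger
two-sided bound `|A|₊ ≤ e^{2ε} |B|₊` and `|B|₊ ≤ e^{2ε} |A|₊`, together with `1 ≤ |A|₊` and
`1 - 2ε ≤ e^{-2ε}`.

For `|A|₊ ≤ e^{2ε} |B|₊` (`cMaxDiv_le_exp_mul`), let `w` be a nonnegative weight on a finite
`s ⊆ A` and let `f` send each point of `A` to a nearest point of `B`, at distance at most `ε`.
The pushforward of `w` along `f` has the same total mass as `w`, and since
`d(x, y) ≤ d(f x, f y) + 2ε`, its energy `∑ e^{-d} w w` is at most `e^{2ε}` times that of `w`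
(`ratioW_le_exp_mul_pushW`). Boundedness of the diversity quotients on a finite set comes from
`ratioW_le_card`.
-/

open scoped BigOperators

/-- The quotient `(Σ_{x∈s} w_x)² / (Σ_{x,y∈s} e^{-d(x,y)} w_x w_y)`. -/
noncomputable def ratioW {X : Type*} [MetricSpace X] (s : Finset X) (w : X → ℝ) : ℝ :=
  (∑ x ∈ s, w x) ^ 2 / ∑ x ∈ s, ∑ y ∈ s, Real.exp (-dist x y) * w x * w y

/-- The maximum diversity `|s|₊` of a finite subset `s`. -/
noncomputable def finMaxDiv {X : Type*} [MetricSpace X] (s : Finset X) : ℝ :=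
  sSup {r : ℝ | ∃ w : X → ℝ,
    (∀ x ∉ s, w x = 0) ∧ w ≠ 0 ∧ (∀ x, 0 ≤ w x) ∧ r = ratioW s w}

/-- The set of maximum diversities of finite nonempty subsets of `A`. -/
def divSet {X : Type*} [MetricSpace X] (A : Set X) : Set ℝ :=
  {r : ℝ | ∃ s : Finset X, s.Nonempty ∧ ↑s ⊆ A ∧ r = finMaxDiv s}

/-- The maximum diversity `|A|₊` of a compact subset `A`: the supremum of the maximum
diversities of its finite nonempty subsets. -/
noncomputable def cMaxDiv {X : Type*} [MetricSpace X] (A : Set X) : ℝ :=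
  sSup (divSet A)

open Finset in
/-- For nonnegative weights the energy dominates its diagonal `∑ w²`, so Cauchy–Schwarz bounds
the diversity quotient by the number of points. -/
lemma ratioW_le_card {X : Type*} [MetricSpace X] (s : Finset X) (w : X → ℝ)
    (hw : ∀ x, 0 ≤ w x) : ratioW s w ≤ s.card := by
  have hdiag : ∑ x ∈ s, w x ^ 2 ≤ ∑ x ∈ s, ∑ y ∈ s, Real.exp (-dist x y) * w x * w y := by
    refine sum_le_sum fun x hx => ?_
    have h := single_le_sum (f := fun y => Real.exp (-dist x y) * w x * w y)
      (fun y _ => mul_nonneg (mul_nonneg (Real.exp_pos _).le (hw x)) (hw y)) hx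
    simp only [dist_self, neg_zero, Real.exp_zero, one_mul] at h
    rw [sq]
    exact h
  have hcs : (∑ x ∈ s, w x) ^ 2 ≤ s.card * ∑ x ∈ s, w x ^ 2 := sq_sum_le_card_mul_sum_sq
  have hE : 0 ≤ ∑ x ∈ s, ∑ y ∈ s, Real.exp (-dist x y) * w x * w y :=
    (sum_nonneg fun x _ => sq_nonneg (w x)).trans hdiag
  exact div_le_of_le_mul₀ hE (Nat.cast_nonneg _)
    (hcs.trans (mul_le_mul_of_nonneg_left hdiag (Nat.cast_nonneg _)))

lemma ratioW_le_cMaxDiv {X : Type*} [MetricSpace X] {B : Set X} (hB : BddAbove (divSet B))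
    (s : Finset X) (hs : ↑s ⊆ B) (w : X → ℝ) (h0 : ∀ x ∉ s, w x = 0) (hne : w ≠ 0)
    (hw : ∀ x, 0 ≤ w x) : ratioW s w ≤ cMaxDiv B := by
  have hsne : s.Nonempty := by
    obtain ⟨x, hx⟩ := Function.ne_iff.mp hne
    exact ⟨x, by_contra fun h => hx (h0 x h)⟩
  have h1 : ratioW s w ≤ finMaxDiv s := by
    refine le_csSup ⟨s.card, ?_⟩ ⟨w, h0, hne, hw, rfl⟩
    rintro r ⟨v, -, -, hv, rfl⟩
    exact ratioW_le_card s v hv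
  exact h1.trans (le_csSup hB ⟨s, hsne, hs, rfl⟩)

lemma one_le_cMaxDiv {X : Type*} [MetricSpace X] {A : Set X} (hA : BddAbove (divSet A))
    (hne : A.Nonempty) : 1 ≤ cMaxDiv A := by
  classical
  obtain ⟨a, ha⟩ := hne
  have h := ratioW_le_cMaxDiv hA {a} (by simpa using ha) (Pi.single a 1)
    (fun x hx => Pi.single_eq_of_ne (by simpa using hx) _)
    (by simp)
    (fun x => by
      by_cases hx : x = a
      · subst hx; simp
      · simp [Pi.single_eq_of_ne hx])
  simpa [ratioW] using h

open Classical in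
/-- The pushforward along `f` of the restriction of the weight `w` to `s`. -/
noncomputable def pushW {X : Type*} (f : X → X) (s : Finset X) (w : X → ℝ) (y : X) : ℝ :=
  ∑ x ∈ s with f x = y, w x

open Classical in
/-- Change of variables for the pushforward weight. -/
lemma sum_pushW_mul {X : Type*} (f : X → X) (s : Finset X) (w g : X → ℝ) :
    ∑ y ∈ s.image f, pushW f s w y * g y = ∑ x ∈ s, w x * g (f x) := by
  rw [← Finset.sum_fiberwise_of_maps_to (s := s) (t := s.image f) (g := f)
    (fun x hx => Finset.mem_image_of_mem f hx)]
  refine Finset.sum_congr rfl fun y _ => ?_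
  rw [pushW, Finset.sum_mul]
  refine Finset.sum_congr rfl fun x hx => ?_
  rw [(Finset.mem_filter.mp hx).2]

open Classical in
/-- Moving every point of `s` by at most `ε` lowers the diversity quotient by a factor of at
most `e^{2ε}`. -/
lemma ratioW_le_exp_mul_pushW {X : Type*} [MetricSpace X] (f : X → X) (s : Finset X) (w : X → ℝ)
    (hw : ∀ x, 0 ≤ w x) (hpos : 0 < ∑ x ∈ s, w x) {ε : ℝ} (hf : ∀ x ∈ s, dist x (f x) ≤ ε) :
    ratioW s w ≤ Real.exp (2 * ε) * ratioW (s.image f) (pushW f s w) := by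
  have hmass : ∑ y ∈ s.image f, pushW f s w y = ∑ x ∈ s, w x := by
    simpa using sum_pushW_mul f s w (fun _ => 1)
  have henergy : ∑ x ∈ s.image f, ∑ y ∈ s.image f,
        Real.exp (-dist x y) * pushW f s w x * pushW f s w y
      = ∑ x ∈ s, ∑ y ∈ s, Real.exp (-dist (f x) (f y)) * w x * w y := by
    calc _ = ∑ x ∈ s.image f, pushW f s w x *
          ∑ y ∈ s.image f, pushW f s w y * Real.exp (-dist x y) := by
          refine Finset.sum_congr rfl fun x _ => ?_
          rw [Finset.mul_sum]
          exact Finset.sum_congr rfl fun y _ => by ring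
      _ = ∑ x ∈ s, w x * ∑ y ∈ s, w y * Real.exp (-dist (f x) (f y)) := by
          rw [sum_pushW_mul f s w fun x =>
            ∑ y ∈ s.image f, pushW f s w y * Real.exp (-dist x y)]
          refine Finset.sum_congr rfl fun x _ => ?_
          rw [sum_pushW_mul f s w fun y => Real.exp (-dist (f x) y)]
      _ = _ := by
          refine Finset.sum_congr rfl fun x _ => ?_
          rw [Finset.mul_sum]
          exact Finset.sum_congr rfl fun y _ => by ring
  have hle : ∑ x ∈ s, ∑ y ∈ s, Real.exp (-dist (f x) (f y)) * w x * w y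
      ≤ Real.exp (2 * ε) * ∑ x ∈ s, ∑ y ∈ s, Real.exp (-dist x y) * w x * w y := by
    rw [Finset.mul_sum]
    refine Finset.sum_le_sum fun x hx => ?_
    rw [Finset.mul_sum]
    refine Finset.sum_le_sum fun y hy => ?_
    have hd : Real.exp (-dist (f x) (f y)) ≤ Real.exp (2 * ε) * Real.exp (-dist x y) := by
      rw [← Real.exp_add]
      refine Real.exp_le_exp.mpr ?_
      have h4 := dist_triangle4 x (f x) (f y) y
      have hx' := hf x hx
      have hy' := hf y hy
      rw [dist_comm] at hy'
      linarith
    have := mul_le_mul_of_nonneg_right hd (mul_nonneg (hw x) (hw y))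
    linarith
  have hEpos : 0 < ∑ x ∈ s, ∑ y ∈ s, Real.exp (-dist (f x) (f y)) * w x * w y := by
    obtain ⟨a, ha, hwa⟩ := (Finset.sum_pos_iff_of_nonneg fun x _ => hw x).mp hpos
    have hterm : ∀ x y, 0 ≤ Real.exp (-dist (f x) (f y)) * w x * w y := fun x y =>
      mul_nonneg (mul_nonneg (Real.exp_pos _).le (hw x)) (hw y)
    refine Finset.sum_pos' (fun x _ => Finset.sum_nonneg fun y _ => hterm x y) ⟨a, ha, ?_⟩
    exact Finset.sum_pos' (fun y _ => hterm a y) ⟨a, ha, by positivity⟩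
  unfold ratioW
  rw [hmass, henergy, ← mul_div_assoc]
  have hE' := hEpos.trans_le hle
  have hE : 0 < ∑ x ∈ s, ∑ y ∈ s, Real.exp (-dist x y) * w x * w y :=
    pos_of_mul_pos_right hE' (Real.exp_pos _).le
  rw [div_le_div_iff₀ hE hEpos]
  nlinarith [mul_le_mul_of_nonneg_left hle (sq_nonneg (∑ x ∈ s, w x))]

lemma cMaxDiv_le_exp_mul {X : Type*} [MetricSpace X] {A B : Set X} (hAc : IsCompact A)
    (hBc : IsCompact B) (hAne : A.Nonempty) (hBne : B.Nonempty) (hBfin : BddAbove (divSet B)) :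
    cMaxDiv A ≤ Real.exp (2 * Metric.hausdorffDist A B) * cMaxDiv B := by
  classical
  have h0 : 0 ≤ Real.exp (2 * Metric.hausdorffDist A B) * cMaxDiv B :=
    mul_nonneg (Real.exp_pos _).le (zero_le_one.trans (one_le_cMaxDiv hBfin hBne))
  have hfin : Metric.hausdorffEDist A B ≠ ⊤ :=
    Metric.hausdorffEDist_ne_top_of_nonempty_of_bounded hAne hBne hAc.isBounded hBc.isBounded
  choose f hfB hf using fun x => hBc.exists_infDist_eq_dist hBne x
  have hdist : ∀ x ∈ A, dist x (f x) ≤ Metric.hausdorffDist A B := fun x hx =>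
    (hf x).symm.le.trans (Metric.infDist_le_hausdorffDist_of_mem hx hfin)
  refine Real.sSup_le ?_ h0
  rintro _ ⟨s, -, hsA, rfl⟩
  refine Real.sSup_le ?_ h0
  rintro _ ⟨w, hw0, hne, hw, rfl⟩
  have hpos : 0 < ∑ x ∈ s, w x := by
    obtain ⟨a, ha⟩ := Function.ne_iff.mp hne
    exact Finset.sum_pos' (fun x _ => hw x)
      ⟨a, by_contra fun h => ha (hw0 a h), lt_of_le_of_ne (hw a) (Ne.symm ha)⟩
  refine (ratioW_le_exp_mul_pushW f s w hw hpos fun x hx => hdist x (hsA hx)).trans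
    (mul_le_mul_of_nonneg_left ?_ (Real.exp_pos _).le)
  refine ratioW_le_cMaxDiv hBfin _ ?_ _ ?_ ?_ fun y => Finset.sum_nonneg fun x _ => hw x
  · intro y hy
    obtain ⟨x, -, rfl⟩ := Finset.mem_image.mp (Finset.mem_coe.mp hy)
    exact hfB x
  · intro y hy
    refine Finset.sum_eq_zero fun x hx => (hy ?_).elim
    obtain ⟨hxs, rfl⟩ := Finset.mem_filter.mp hx
    exact Finset.mem_image_of_mem f hxs
  · intro hzero
    have hmass := sum_pushW_mul f s w (fun _ => 1)
    simp only [hzero, Pi.zero_apply, mul_one, Finset.sum_const_zero] at hmass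
    exact hpos.ne hmass

/-- `|B|₊/|A|₊ ≥ 1 − 8|A|₊ d_H(A,B)`, and if `8|A|₊ d_H(A,B) < 1` then
`|B|₊/|A|₊ ≤ 1/(1 − 8|A|₊ d_H(A,B))`, for nonempty compact `A, B` with finite maximum
diversity. -/
theorem stmt13 {X : Type*} [MetricSpace X] (hpd : PosDefSpace X)
    (A B : Set X) (hAc : IsCompact A) (hBc : IsCompact B)
    (hAne : A.Nonempty) (hBne : B.Nonempty)
    (hAfin : BddAbove (divSet A)) (hBfin : BddAbove (divSet B)) :
    1 - 8 * cMaxDiv A * Metric.hausdorffDist A B ≤ cMaxDiv B / cMaxDiv A ∧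
      (8 * cMaxDiv A * Metric.hausdorffDist A B < 1 →
        cMaxDiv B / cMaxDiv A ≤ 1 / (1 - 8 * cMaxDiv A * Metric.hausdorffDist A B)) := by
  have hAB := cMaxDiv_le_exp_mul hAc hBc hAne hBne hBfin
  have hBA := cMaxDiv_le_exp_mul hBc hAc hBne hAne hAfin
  rw [Metric.hausdorffDist_comm] at hBA
  have ha := one_le_cMaxDiv hAfin hAne
  have hb := one_le_cMaxDiv hBfin hBne
  have hε : 0 ≤ Metric.hausdorffDist A B := Metric.hausdorffDist_nonneg
  generalize cMaxDiv A = a at *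
  generalize cMaxDiv B = b at *
  generalize Metric.hausdorffDist A B = ε at *
  have hapos : 0 < a := by linarith
  have hexp : 1 - 8 * a * ε ≤ Real.exp (-(2 * ε)) := by
    have h1 := Real.add_one_le_exp (-(2 * ε))
    have h2 : ε ≤ a * ε := le_mul_of_one_le_left hε ha
    linarith
  have hinv : Real.exp (-(2 * ε)) * Real.exp (2 * ε) = 1 := by
    rw [← Real.exp_add]; simp
  have key : ∀ u v : ℝ, u ≤ Real.exp (2 * ε) * v → Real.exp (-(2 * ε)) * u ≤ v := by
    intro u v h
    have := mul_le_mul_of_nonneg_left h (Real.exp_pos (-(2 * ε))).le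
    rwa [← mul_assoc, hinv, one_mul] at this
  constructor
  · rw [le_div_iff₀ hapos]
    exact (mul_le_mul_of_nonneg_right hexp hapos.le).trans (key a b hAB)
  · intro h
    rw [div_le_div_iff₀ hapos (by linarith), one_mul, mul_comm]
    exact (mul_le_mul_of_nonneg_right hexp (by linarith)).trans (key b a hBA)
end

section
/- Let X be a positive definite metric space and let C_X denote the collection of nonempty compact subsets of X equipped with the Hausdorff distance. Then the magnitude function A ↦ |A| := sup{ |B| : B ⊆ A finite nonempty } ∈ [0,∞] is lower semicontinuous on C_X. -/
/-!
Lower semicontinuity comes from the fact that the quotient defining magnitude is continuous in the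
points once the weights are fixed. If `c < |A|`, some finite `s ⊆ A` and weights `w` have quotient
greater than `c`. Every compact `K` close to `A` contains points `f x` close to the points `x ∈ s`,
and the quotient with points `f x` and weights `w x` is still greater than `c`. Pushing the weights
forward along `f` turns it into a quotient of the finite set `f(s) ⊆ K` (`le_finMag_image`), so
`c < |K|`; the map `f` need not be injective.

Positive definiteness ensures that the supremum defining the magnitude of a finite set is a
genuine one (`bddAbove_ratioW`): if `Z v = 1`, then Cauchy–Schwarz for the form `Z` gives
`(∑ w)² = (wᵀ Z v)² ≤ (wᵀ Z w) (vᵀ Z v)`.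
-/

open scoped BigOperators ENNReal

/-- The magnitude `|s|` of a finite subset `s`: the supremum of the quotient over nonzero
vectors supported on `s`. -/
noncomputable def finMag {X : Type*} [MetricSpace X] (s : Finset X) : ℝ :=
  sSup {r : ℝ | ∃ w : X → ℝ, (∀ x ∉ s, w x = 0) ∧ w ≠ 0 ∧ r = ratioW s w}

/-- The magnitude `|A| ∈ [0,∞]` of a compact subset `A`: the supremum of the magnitudes of its
finite nonempty subsets. -/
noncomputable def cMag {X : Type*} [MetricSpace X] (A : Set X) : ℝ≥0∞ :=
  ⨆ (s : Finset X) (_ : s.Nonempty) (_ : ↑s ⊆ A), ENNReal.ofReal (finMag s)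

open Matrix in
/-- For a positive definite `Z`, the quotient `(∑ w)² / (wᵀ Z w)` is bounded by the sum of the
weighting `v` solving `Z v = 1`. The case `wᵀ Z w = 0` is included, with the quotient read
as `0`. -/
lemma exists_ratio_bound {n : Type*} [Fintype n] {Z : Matrix n n ℝ} (hZ : Z.PosDef) :
    ∃ c : ℝ, ∀ w : n → ℝ, (∑ i, w i) ^ 2 / (w ⬝ᵥ (Z *ᵥ w)) ≤ c := by
  classical
  set v : n → ℝ := Z⁻¹ *ᵥ 1 with hv
  have hZv : Z *ᵥ v = 1 := by
    rw [hv, mulVec_mulVec, mul_nonsing_inv _ ((isUnit_iff_isUnit_det _).1 hZ.isUnit), one_mulVec]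
  have hsymm : Zᵀ = Z := by
    rw [← conjTranspose_eq_transpose_of_trivial]
    exact hZ.isHermitian
  have hnonneg : ∀ w : n → ℝ, 0 ≤ w ⬝ᵥ (Z *ᵥ w) := fun w => by
    simpa using hZ.posSemidef.dotProduct_mulVec_nonneg w
  refine ⟨v ⬝ᵥ 1, fun w => ?_⟩
  have hvw : v ⬝ᵥ (Z *ᵥ w) = ∑ i, w i := by
    rw [dotProduct_mulVec, ← mulVec_transpose, hsymm, hZv, one_dotProduct]
  have hc : 0 ≤ v ⬝ᵥ 1 := by simpa [hZv] using hnonneg v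
  refine div_le_of_le_mul₀ (hnonneg w) hc ?_
  -- The form is nonnegative along the line `a ↦ w + a v`, so its discriminant is nonpositive.
  have hdisc : discrim (v ⬝ᵥ 1) (2 * ∑ i, w i) (w ⬝ᵥ (Z *ᵥ w)) ≤ 0 := by
    refine discrim_le_zero fun a => ?_
    have h := hnonneg (w + a • v)
    simp only [mulVec_add, mulVec_smul, hZv, dotProduct_add, add_dotProduct, smul_dotProduct,
      dotProduct_smul, hvw, smul_eq_mul] at h
    rw [dotProduct_one w] at h
    linarith
  rw [discrim] at hdisc
  nlinarith

lemma bddAbove_ratioW {X : Type*} [MetricSpace X] (hpd : PosDefSpace X) (s : Finset X) :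
    BddAbove {r : ℝ | ∃ w : X → ℝ, (∀ x ∉ s, w x = 0) ∧ w ≠ 0 ∧ r = ratioW s w} := by
  obtain ⟨c, hc⟩ := exists_ratio_bound (hpd s)
  refine ⟨c, ?_⟩
  rintro r ⟨w, -, -, rfl⟩
  refine le_of_eq_of_le ?_ (hc fun x => w x)
  simp only [ratioW, dotProduct, Matrix.mulVec, Matrix.of_apply, Finset.mul_sum]
  rw [← Finset.sum_coe_sort s]
  congr 1
  rw [← Finset.sum_coe_sort s]
  refine Finset.sum_congr rfl fun x _ => ?_
  rw [← Finset.sum_coe_sort s]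
  exact Finset.sum_congr rfl fun y _ => by ring

/-- A positive quotient computed from a family of points, possibly with repetitions, is at most the
magnitude of the set of those points: add up the weights of coinciding points. -/
lemma le_finMag_image {X ι : Type*} [MetricSpace X] [DecidableEq X] [Fintype ι]
    (hpd : PosDefSpace X) (f : ι → X) (w : ι → ℝ)
    (hpos : 0 < (∑ i, w i) ^ 2 / ∑ i, ∑ j, Real.exp (-dist (f i) (f j)) * w i * w j) :
    (∑ i, w i) ^ 2 / ∑ i, ∑ j, Real.exp (-dist (f i) (f j)) * w i * w j
      ≤ finMag (Finset.univ.image f) := by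
  set u : X → ℝ := fun y => ∑ i with f i = y, w i with hu
  have push : ∀ g : X → ℝ, ∑ y ∈ Finset.univ.image f, g y * u y = ∑ i, g (f i) * w i := by
    intro g
    rw [← Finset.sum_fiberwise_of_maps_to
      (fun i _ => Finset.mem_image_of_mem f (Finset.mem_univ i))]
    refine Finset.sum_congr rfl fun y _ => ?_
    rw [hu, Finset.mul_sum]
    refine Finset.sum_congr rfl fun i hi => ?_
    rw [(Finset.mem_filter.1 hi).2]
  have hratio : ratioW (Finset.univ.image f) u
      = (∑ i, w i) ^ 2 / ∑ i, ∑ j, Real.exp (-dist (f i) (f j)) * w i * w j := by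
    have h1 : ∑ y ∈ Finset.univ.image f, u y = ∑ i, w i := by simpa using push fun _ => 1
    have h2 : ∑ x ∈ Finset.univ.image f, ∑ y ∈ Finset.univ.image f,
          Real.exp (-dist x y) * u x * u y
        = ∑ i, ∑ j, Real.exp (-dist (f i) (f j)) * w i * w j := by
      calc _ = ∑ x ∈ Finset.univ.image f, (∑ j, Real.exp (-dist x (f j)) * w j) * u x := by
            refine Finset.sum_congr rfl fun x _ => ?_
            rw [push fun y => Real.exp (-dist x y) * u x, Finset.sum_mul]
            exact Finset.sum_congr rfl fun j _ => by ring
        _ = _ := by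
            rw [push fun x => ∑ j, Real.exp (-dist x (f j)) * w j]
            refine Finset.sum_congr rfl fun i _ => ?_
            rw [Finset.sum_mul]
            exact Finset.sum_congr rfl fun j _ => by ring
    rw [ratioW, h1, h2]
  rw [← hratio] at hpos ⊢
  refine le_csSup (bddAbove_ratioW hpd _) ⟨u, fun y hy => ?_, ?_, rfl⟩
  · refine Finset.sum_eq_zero fun i hi => absurd ?_ hy
    rw [← (Finset.mem_filter.1 hi).2]
    exact Finset.mem_image_of_mem f (Finset.mem_univ i)
  · intro h0
    simp [ratioW, h0] at hpos

/-- the magnitude function is lower semicontinuous on the space of nonempty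
compact subsets of a positive definite metric space, with the Hausdorff distance. -/
theorem stmt14 {X : Type*} [MetricSpace X] (hpd : PosDefSpace X) :
    LowerSemicontinuous
      (fun K : TopologicalSpace.NonemptyCompacts X => cMag (K : Set X)) := by
  classical
  intro A c hc
  simp only [cMag, lt_iSup_iff] at hc
  obtain ⟨s, hs, hsA, hc⟩ := hc
  have hctop : c ≠ ⊤ := hc.ne_top
  rw [ENNReal.lt_ofReal_iff_toReal_lt hctop] at hc
  -- The supremum over an empty set would be `0`, which is not greater than `c.toReal`.
  have hne : {r : ℝ | ∃ w : X → ℝ, (∀ x ∉ s, w x = 0) ∧ w ≠ 0 ∧ r = ratioW s w}.Nonempty := by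
    by_contra h
    rw [finMag, Set.not_nonempty_iff_eq_empty.1 h, Real.sSup_empty] at hc
    exact hc.not_ge ENNReal.toReal_nonneg
  obtain ⟨_, ⟨w, -, -, rfl⟩, hw⟩ := exists_lt_of_lt_csSup hne hc
  let D : (s → X) → ℝ := fun f =>
    ∑ i : s, ∑ j : s, Real.exp (-dist (f i) (f j)) * w i * w j
  let F : (s → X) → ℝ := fun f => (∑ i : s, w i) ^ 2 / D f
  have hF : F (fun x => x) = ratioW s w := by
    simp only [F, D, ratioW]
    rw [← Finset.sum_coe_sort s w]
    congr 1
    rw [← Finset.sum_coe_sort s]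
    refine Finset.sum_congr rfl fun x _ => ?_
    rw [← Finset.sum_coe_sort s]
  -- The quotient is positive, so its denominator is not the junk case `0`.
  have hD : D (fun x => x) ≠ 0 := by
    intro h0
    rw [← hF] at hw
    simp only [F, h0, div_zero] at hw
    exact hw.not_ge ENNReal.toReal_nonneg
  have hcont : ContinuousAt F (fun x => x) := by
    have hDc : Continuous D := by fun_prop
    exact continuousAt_const.div hDc.continuousAt hD
  obtain ⟨δ, hδ, hball⟩ := Metric.eventually_nhds_iff.1
    (hcont.eventually (lt_mem_nhds (hF.symm ▸ hw)))
  have hnear : ∀ᶠ K : TopologicalSpace.NonemptyCompacts X in nhds A,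
      ∀ x : s, ((K : Set X) ∩ Metric.ball (x : X) δ).Nonempty := by
    refine Filter.eventually_all.2 fun x => ?_
    exact (TopologicalSpace.NonemptyCompacts.isOpen_inter_nonempty_of_isOpen
      Metric.isOpen_ball).mem_nhds ⟨x, hsA x.2, Metric.mem_ball_self hδ⟩
  filter_upwards [hnear] with K hK
  choose f hfK hfδ using hK
  have hfF : c.toReal < F f := hball ((dist_pi_lt_iff hδ).2 hfδ)
  have hle : F f ≤ finMag (Finset.univ.image f) :=
    le_finMag_image hpd f (fun i => w i) (ENNReal.toReal_nonneg.trans_lt hfF)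
  have hlt : c < ENNReal.ofReal (finMag (Finset.univ.image f)) :=
    (ENNReal.lt_ofReal_iff_toReal_lt hctop).2 (hfF.trans_le hle)
  simp only [cMag, lt_iSup_iff]
  refine ⟨Finset.univ.image f, ?_, ?_, hlt⟩
  · have : Nonempty s := hs.to_subtype
    exact Finset.univ_nonempty.image f
  · intro y hy
    obtain ⟨i, -, rfl⟩ := Finset.mem_image.1 (Finset.mem_coe.1 hy)
    exact hfK i
end

section
/- Let (A,d) be a nonempty finite positive definite metric space with weighting w_A and diversifier w_{A,+}. Then Σ_{x,y∈A} e^{-d(x,y)} ((w_{A,+})_x − (w_A)_x)((w_{A,+})_y − (w_A)_y) = |A| − |A|_+; that is, the squared Z_A-norm of w_{A,+} − w_A equals the magnitude minus the maximum diversity. -/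
/-!
Write `Z` for the similarity matrix. Since `Z w = 𝟏` and `Z` is symmetric, expanding the
quadratic form at `wp - w` gives `wpᵀ Z wp - 2 Σ wp + Σ w`. The diversifier attains the supremum,
so `Σ wp = |A|₊ = (Σ wp)² / (wpᵀ Z wp)`; as `Σ wp ≠ 0` this forces `wpᵀ Z wp = Σ wp = |A|₊`,
and the expression collapses to `|A| - |A|₊`.
-/

open scoped BigOperators

/-- the squared `Z_A`-norm of `w_{A,+} − w_A` equals `|A| − |A|₊`, where the
magnitude `|A|` is the total mass of the weighting `w_A` (the vector with `Z_A w_A = 𝟏`). -/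
theorem stmt17 {A : Type*} [Fintype A] [Nonempty A] [MetricSpace A]
    (hpd : (simMat A).PosDef) (w wp : A → ℝ)
    (hw : ∀ x : A, ∑ y, Real.exp (-dist x y) * w y = 1)
    (hwp : IsDiversifier wp) :
    ∑ x, ∑ y, Real.exp (-dist x y) * (wp x - w x) * (wp y - w y) =
      (∑ x, w x) - maxDiv A := by
  obtain ⟨hne, hnn, hmax, hsum⟩ := hwp
  -- The maximizer attains the supremum, so the `sSup` is a genuine maximum.
  have hdiv : maxDiv A = magRatio wp := by
    have hg : IsGreatest {r : ℝ | ∃ w : A → ℝ, w ≠ 0 ∧ (∀ x, 0 ≤ w x) ∧ r = magRatio w}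
        (magRatio wp) := by
      refine ⟨⟨wp, hne, hnn, rfl⟩, ?_⟩
      rintro r ⟨v, hv, hv0, rfl⟩
      exact hmax v hv hv0
    exact hg.csSup_eq
  have hS : ∑ x, wp x ≠ 0 := by
    intro h
    apply hne
    funext x
    exact (Finset.sum_eq_zero_iff_of_nonneg fun i _ => hnn i).1 h x (Finset.mem_univ x)
  -- With `S = Σ wp` and `Q` the quadratic form at `wp`, `S = S² / Q` and `S ≠ 0` give `Q = S`.
  have hQ : ∑ x, ∑ y, Real.exp (-dist x y) * wp x * wp y = ∑ x, wp x := by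
    have h : ∑ x, wp x = (∑ x, wp x) ^ 2 / ∑ x, ∑ y, Real.exp (-dist x y) * wp x * wp y :=
      hsum.trans hdiv
    have hQ0 : ∑ x, ∑ y, Real.exp (-dist x y) * wp x * wp y ≠ 0 := by
      intro h0
      rw [h0, div_zero] at h
      exact hS h
    rw [eq_div_iff hQ0, sq] at h
    exact mul_left_cancel₀ hS h
  have hright : ∀ v : A → ℝ, ∑ x, ∑ y, Real.exp (-dist x y) * v x * w y = ∑ x, v x := by
    intro v
    refine Finset.sum_congr rfl fun x _ => ?_
    calc ∑ y, Real.exp (-dist x y) * v x * w y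
        = v x * ∑ y, Real.exp (-dist x y) * w y := by
          rw [Finset.mul_sum]
          exact Finset.sum_congr rfl fun y _ => by ring
      _ = v x := by rw [hw x, mul_one]
  have hleft : ∑ x, ∑ y, Real.exp (-dist x y) * w x * wp y = ∑ x, wp x := by
    rw [← hright wp, Finset.sum_comm]
    refine Finset.sum_congr rfl fun x _ => Finset.sum_congr rfl fun y _ => ?_
    rw [dist_comm]
    ring
  have hexp : ∑ x, ∑ y, Real.exp (-dist x y) * (wp x - w x) * (wp y - w y) =
      ∑ x, ∑ y, Real.exp (-dist x y) * wp x * wp y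
        - ∑ x, ∑ y, Real.exp (-dist x y) * wp x * w y
        - ∑ x, ∑ y, Real.exp (-dist x y) * w x * wp y
        + ∑ x, ∑ y, Real.exp (-dist x y) * w x * w y := by
    simp only [← Finset.sum_sub_distrib, ← Finset.sum_add_distrib]
    exact Finset.sum_congr rfl fun x _ => Finset.sum_congr rfl fun y _ => by ring
  rw [hexp, hQ, hright wp, hleft, hright w, ← hsum]
  ring
end

section
/- Let (X,d) be a nonempty finite positive definite metric space whose weighting w_X is entrywise nonnegative. Then the maximum diversity equals the magnitude, |X|_+ = |X|, and the diversifier equals the weighting, w_{X,+} = w_X. -/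
/-!
Write `Q v = ∑ x, ∑ y, e^{-d(x,y)} v x v y` for the quadratic form of the similarity matrix, and
`M = ∑ x, w x` for the magnitude. The weighting equation says that pairing any `v` with `w` under
this form gives `∑ x, v x`; in particular `Q w = M`. Nonnegativity of `Q (v - t • w)` with
`t = (∑ x, v x) / M` is then the Cauchy–Schwarz bound `(∑ x, v x)² ≤ M * Q v`, so every quotient is
at most `M`, with equality at `v = w`. As `w` is nonnegative, it is admissible in the supremum
defining the maximum diversity, which therefore equals `M`.
-/

open scoped BigOperators

/-- The quadratic form of the similarity matrix is positive off zero. -/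
lemma quadForm_pos {X : Type*} [Fintype X] [MetricSpace X] (hpd : (simMat X).PosDef)
    {v : X → ℝ} (hv : v ≠ 0) : 0 < ∑ x, ∑ y, Real.exp (-dist x y) * v x * v y := by
  have h := hpd.dotProduct_mulVec_pos hv
  simp only [dotProduct, Matrix.mulVec, simMat, Matrix.of_apply, star_trivial,
    Finset.mul_sum] at h
  refine h.trans_eq (Finset.sum_congr rfl fun x _ => Finset.sum_congr rfl fun y _ => ?_)
  ring

/-- The pairing of any vector with the weighting is the sum of its entries. -/
lemma pairing_weighting {X : Type*} [Fintype X] [MetricSpace X] {w : X → ℝ}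
    (hw : ∀ x : X, ∑ y, Real.exp (-dist x y) * w y = 1) (v : X → ℝ) :
    ∑ x, ∑ y, Real.exp (-dist x y) * v x * w y = ∑ x, v x := by
  refine Finset.sum_congr rfl fun x _ => ?_
  calc ∑ y, Real.exp (-dist x y) * v x * w y
      = v x * ∑ y, Real.exp (-dist x y) * w y := by
        rw [Finset.mul_sum]
        exact Finset.sum_congr rfl fun y _ => by ring
    _ = v x := by rw [hw, mul_one]

/-- Expansion of the quadratic form at `v - t • w`, where `w` is the weighting. -/
lemma quadForm_sub_smul {X : Type*} [Fintype X] [MetricSpace X] {w : X → ℝ}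
    (hw : ∀ x : X, ∑ y, Real.exp (-dist x y) * w y = 1) (v : X → ℝ) (t : ℝ) :
    ∑ x, ∑ y, Real.exp (-dist x y) * (v - t • w) x * (v - t • w) y =
      (∑ x, ∑ y, Real.exp (-dist x y) * v x * v y) - 2 * t * (∑ x, v x) + t ^ 2 * ∑ x, w x := by
  have hswap : ∑ x, ∑ y, Real.exp (-dist x y) * w x * v y = ∑ x, v x := by
    rw [← pairing_weighting hw v, Finset.sum_comm]
    refine Finset.sum_congr rfl fun x _ => Finset.sum_congr rfl fun y _ => ?_
    rw [dist_comm]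
    ring
  calc ∑ x, ∑ y, Real.exp (-dist x y) * (v - t • w) x * (v - t • w) y
      = (∑ x, ∑ y, Real.exp (-dist x y) * v x * v y)
        - t * (∑ x, ∑ y, Real.exp (-dist x y) * v x * w y)
        - t * (∑ x, ∑ y, Real.exp (-dist x y) * w x * v y)
        + t ^ 2 * ∑ x, ∑ y, Real.exp (-dist x y) * w x * w y := by
        simp only [Finset.mul_sum, ← Finset.sum_sub_distrib, ← Finset.sum_add_distrib]
        refine Finset.sum_congr rfl fun x _ => Finset.sum_congr rfl fun y _ => ?_
        simp only [Pi.sub_apply, Pi.smul_apply, smul_eq_mul]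
        ring
    _ = _ := by
        rw [hswap, pairing_weighting hw v, pairing_weighting hw w]
        ring

/-- if the weighting `w_X` (the vector with `Z_X w_X = 𝟏`) is entrywise
nonnegative, then the maximum diversity equals the magnitude `|X| = Σ_x (w_X)_x`, and the
weighting is the diversifier. -/
theorem stmt18 {X : Type*} [Fintype X] [Nonempty X] [MetricSpace X]
    (hpd : (simMat X).PosDef) (w : X → ℝ)
    (hw : ∀ x : X, ∑ y, Real.exp (-dist x y) * w y = 1)
    (hw_nn : ∀ x, 0 ≤ w x) :
    maxDiv X = ∑ x, w x ∧ IsDiversifier w := by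
  have hw0 : w ≠ 0 := by
    rintro rfl
    simpa using hw (Classical.arbitrary X)
  have hM : 0 < ∑ x, w x := by
    rw [← pairing_weighting hw w]
    exact quadForm_pos hpd hw0
  have hratio : magRatio w = ∑ x, w x := by
    rw [magRatio, pairing_weighting hw w]
    field_simp
  have hle : ∀ v : X → ℝ, v ≠ 0 → (∀ x, 0 ≤ v x) → magRatio v ≤ magRatio w := by
    intro v hv _
    rw [hratio, magRatio, div_le_iff₀ (quadForm_pos hpd hv)]
    -- The minimum of `t ↦ Q (v - t • w)` is attained at this `t`.
    set t : ℝ := (∑ x, v x) / ∑ x, w x with ht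
    have hnn : 0 ≤ ∑ x, ∑ y, Real.exp (-dist x y) * (v - t • w) x * (v - t • w) y := by
      by_cases h : v - t • w = 0
      · rw [h]
        simp
      · exact (quadForm_pos hpd h).le
    rw [quadForm_sub_smul hw] at hnn
    have htM : ∑ x, v x = t * ∑ x, w x := by
      rw [ht]
      field_simp
    rw [htM] at hnn ⊢
    nlinarith [mul_nonneg hM.le hnn]
  have hmax : maxDiv X = ∑ x, w x := by
    rw [← hratio]
    refine IsGreatest.csSup_eq ⟨⟨w, hw0, hw_nn, rfl⟩, ?_⟩
    rintro r ⟨v, hv, hv_nn, rfl⟩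
    exact hle v hv hv_nn
  exact ⟨hmax, hw0, hw_nn, hle, hmax.symm⟩
end

section
/- Let s : ℝ → ℝ be a differentiable function that is periodic with period T > 0 and satisfies |s'(t)| ≤ M for all t. Fix τ > 0, an integer d ≥ 1, a sampling frequency f > 0 such that f·τ is a positive integer, a starting time t⁰ ∈ ℝ, a number δ ≥ 0, an integer L with L/f − (d−1)τ ≥ T, and errors e₁,…,e_L with |e_k| ≤ δ for all k. Define s_k := s(t⁰ + k/f) + e_k for 1 ≤ k ≤ L, and consider the subsets of Euclidean space ℝ^d: A := { (s(t), s(t+τ), …, s(t+(d−1)τ)) : t ∈ ℝ } and Â := { (s_k, s_{k+fτ}, …, s_{k+(d−1)fτ}) : 1 ≤ k ≤ L − (d−1)fτ }. Then the Hausdorff distance satisfies d_H(A, Â) ≤ √d · (δ + M/f). -/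
/-!
The mean value inequality makes `s` Lipschitz with constant `M`. If `t` lies within `1 / f` of the
sampling time `t0 + k / f`, then, since `n = f τ`, each coordinate of the embedded point at `t`
differs from the `k`-th sampled point by at most `δ + M / f`, so their Euclidean distance is at
most `√d (δ + M / f)`. Every sampled point is matched with the embedded point at its own time.
Conversely, periodicity moves any `t` into `(t0, t0 + T]`, and rounding up to the next sampling
time gives an index `1 ≤ k ≤ ⌈f T⌉ ≤ L - (d - 1) n`.
-/

theorem euclidean_dist_le_sqrt_mul {d : ℕ} {p q : EuclideanSpace ℝ (Fin d)} {r : ℝ} (hr : 0 ≤ r)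
    (h : ∀ i, |p i - q i| ≤ r) : dist p q ≤ Real.sqrt d * r := by
  rw [EuclideanSpace.dist_eq]
  have hsum : ∑ i, dist (p i) (q i) ^ 2 ≤ (d : ℝ) * r ^ 2 := by
    calc ∑ i, dist (p i) (q i) ^ 2 ≤ ∑ _i : Fin d, r ^ 2 := by
          refine Finset.sum_le_sum fun i _ => ?_
          rw [Real.dist_eq]
          exact pow_le_pow_left₀ (abs_nonneg _) (h i) 2
      _ = (d : ℝ) * r ^ 2 := by simp
  calc Real.sqrt (∑ i, dist (p i) (q i) ^ 2) ≤ Real.sqrt ((d : ℝ) * r ^ 2) := Real.sqrt_le_sqrt hsum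
    _ = Real.sqrt d * r := by rw [Real.sqrt_mul (Nat.cast_nonneg d), Real.sqrt_sq hr]

/-- for a periodic differentiable signal `s` with period `T` and `|s'| ≤ M`,
the time-delay embedding `A` of the continuous signal and the time-delay embedding `Â` of a
sampled segment (sampling frequency `f`, errors bounded by `δ`, retaining at least one period)
satisfy `d_H(A, Â) ≤ √d · (δ + M/f)`. -/
theorem stmt19 (s : ℝ → ℝ) (T M τ f δ t0 : ℝ) (d L n : ℕ) (e : ℕ → ℝ)
    (hT : 0 < T) (hper : ∀ t, s (t + T) = s t)
    (hdiff : Differentiable ℝ s) (hM : ∀ t, |deriv s t| ≤ M)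
    (hτ : 0 < τ) (hd : 1 ≤ d) (hf : 0 < f)
    (hn : 0 < n) (hnf : (n : ℝ) = f * τ)
    (hδ : 0 ≤ δ)
    (hL : T ≤ (L : ℝ) / f - ((d : ℝ) - 1) * τ)
    (he : ∀ k : ℕ, 1 ≤ k → k ≤ L → |e k| ≤ δ) :
    Metric.hausdorffDist
      {p : EuclideanSpace ℝ (Fin d) | ∃ t : ℝ,
        ∀ i : Fin d, p i = s (t + (i : ℕ) * τ)}
      {p : EuclideanSpace ℝ (Fin d) | ∃ k : ℕ, 1 ≤ k ∧ k + (d - 1) * n ≤ L ∧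
        ∀ i : Fin d, p i = s (t0 + ((k + (i : ℕ) * n : ℕ) : ℝ) / f) + e (k + (i : ℕ) * n)} ≤
      Real.sqrt d * (δ + M / f) := by
  have hM0 : 0 ≤ M := (abs_nonneg _).trans (hM 0)
  have hr : 0 ≤ δ + M / f := by positivity
  have hlip : ∀ x y, |s x - s y| ≤ M * |x - y| := fun x y =>
    Convex.norm_image_sub_le_of_norm_deriv_le (fun z _ => hdiff z) (fun z _ => hM z)
      convex_univ (Set.mem_univ y) (Set.mem_univ x)
  have hclose : ∀ (t : ℝ) (k : ℕ), 1 ≤ k → k + (d - 1) * n ≤ L → |t - (t0 + k / f)| ≤ 1 / f →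
      ∀ i : Fin d, |s (t + (i : ℕ) * τ) -
        (s (t0 + ((k + (i : ℕ) * n : ℕ) : ℝ) / f) + e (k + (i : ℕ) * n))| ≤ δ + M / f := by
    intro t k hk hkL ht i
    have hi : (i : ℕ) * n ≤ (d - 1) * n := Nat.mul_le_mul_right n (by omega)
    have herr := he (k + i * n) (by omega) (by omega)
    -- A lag of `i τ` in time is a shift of `i n` in the sample index.
    have htime : t + (i : ℕ) * τ - (t0 + ((k + (i : ℕ) * n : ℕ) : ℝ) / f) = t - (t0 + k / f) := by
      push_cast
      rw [hnf]
      field_simp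
      ring
    have hs := hlip (t + (i : ℕ) * τ) (t0 + ((k + (i : ℕ) * n : ℕ) : ℝ) / f)
    rw [htime] at hs
    have hs' : M * |t - (t0 + k / f)| ≤ M / f := by
      rw [div_eq_mul_one_div M f]
      exact mul_le_mul_of_nonneg_left ht hM0
    rw [← sub_sub]
    have := abs_sub (s (t + (i : ℕ) * τ) - s (t0 + ((k + (i : ℕ) * n : ℕ) : ℝ) / f))
      (e (k + i * n))
    linarith
  have hcount : f * T + ((d - 1 : ℕ) : ℝ) * n ≤ L := by
    rw [Nat.cast_sub hd, hnf]
    have h := mul_le_mul_of_nonneg_left hL hf.le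
    have h' : f * ((L : ℝ) / f - ((d : ℝ) - 1) * τ) = L - ((d : ℝ) - 1) * (f * τ) := by
      field_simp
    rw [h'] at h
    push_cast
    linarith
  refine Metric.hausdorffDist_le_of_mem_dist (by positivity) ?_ ?_
  · rintro p ⟨t, hp⟩
    -- Periodicity is applied to the whole embedding, so that all coordinates move together.
    have hemb : Function.Periodic (fun (u : ℝ) (i : Fin d) => s (u + (i : ℕ) * τ)) T := by
      intro u
      funext i
      show s (u + T + (i : ℕ) * τ) = s (u + (i : ℕ) * τ)
      rw [add_right_comm, hper]
    obtain ⟨u, ⟨hu0, huT⟩, htu⟩ := hemb.exists_mem_Ioc hT t t0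
    have hpos : 0 < (u - t0) * f := mul_pos (by linarith) hf
    have hk : 1 ≤ ⌈(u - t0) * f⌉₊ := Nat.ceil_pos.2 hpos
    have hkL : ⌈(u - t0) * f⌉₊ + (d - 1) * n ≤ L := by
      have hdn : (d - 1) * n ≤ L := by
        have : (0 : ℝ) < f * T := mul_pos hf hT
        have h : (((d - 1) * n : ℕ) : ℝ) ≤ L := by push_cast; linarith
        exact_mod_cast h
      have : ⌈(u - t0) * f⌉₊ ≤ L - (d - 1) * n := by
        rw [Nat.ceil_le, Nat.cast_sub hdn, Nat.cast_mul]
        nlinarith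
      omega
    have hlow := Nat.le_ceil ((u - t0) * f)
    have hupp := Nat.ceil_lt_add_one hpos.le
    have hnear : |u - (t0 + (⌈(u - t0) * f⌉₊ : ℝ) / f)| ≤ 1 / f := by
      have heq : u - (t0 + (⌈(u - t0) * f⌉₊ : ℝ) / f)
          = ((u - t0) * f - ⌈(u - t0) * f⌉₊) / f := by
        field_simp
        ring
      rw [heq, abs_div, abs_of_pos hf]
      refine div_le_div_of_nonneg_right ?_ hf.le
      rw [abs_le]
      constructor <;> linarith
    refine ⟨WithLp.toLp 2 fun i : Fin d =>
      s (t0 + ((⌈(u - t0) * f⌉₊ + (i : ℕ) * n : ℕ) : ℝ) / f) + e (⌈(u - t0) * f⌉₊ + (i : ℕ) * n),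
      ⟨_, hk, hkL, fun i => rfl⟩, euclidean_dist_le_sqrt_mul hr fun i => ?_⟩
    have hi : s (t + (i : ℕ) * τ) = s (u + (i : ℕ) * τ) := congrFun htu i
    rw [hp i, hi]
    exact hclose u _ hk hkL hnear i
  · rintro q ⟨k, hk, hkL, hq⟩
    refine ⟨WithLp.toLp 2 fun i : Fin d => s (t0 + k / f + (i : ℕ) * τ),
      ⟨t0 + k / f, fun i => rfl⟩, euclidean_dist_le_sqrt_mul hr fun i => ?_⟩
    rw [abs_sub_comm, hq i]
    exact hclose (t0 + k / f) k hk hkL (by simpa using hf.le) i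
end
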